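/- Let p be a prime and G a finite p-group of nilpotency class 2 such that G^p ≤ γ₂(G), with |γ₂(G)| = p^k and d(G) = d. If d ≤ k + 1, then |M(G)| ≤ p^{(d-1)(k+1)}. -/

import Mathlib

/-- The Schur multiplier of a group `G`: the second cohomology group `H²(G, ℂˣ)`
of `G` with coefficients in `ℂˣ` (with trivial `G`-action), as in the paper. -/
noncomputable def schurMultiplier (G : Type) [Group G] : Type :=
  groupCohomology (Rep.trivial ℤ G (Additive ℂˣ)) 2

/-!
Every class in `H²(G, ℂˣ)` comes, by transgression, from one central extension `E` of `G`: its
cocycle is the tautological one, with values in the characters of the group of all `ℂˣ`-valued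
cocycles. As `ℂˣ` is divisible, a character of the kernel extends to `E` as soon as it is trivial
on `γ₂(E)`, and hence `|M(G)|` is at most the order of `γ₂(E) ∩ ker`, which is
`|γ₂(E / γ₃(E))| |γ₃(E)| / p ^ k`.

Since `E` modulo a central subgroup has class two, `γ₃(E)` is central, and `p`-th powers lie in
`γ₂(E) Z(E)`; so both factors are elementary abelian and the first is at most `p ^ (d.choose 2)`.
Choose `k` pairs `{a, b}` whose commutators form a basis of `γ₂(G)`, greedily in colexicographic
order. The `d * k` triple commutators `[x m, [x a, x b]]` over these pairs span `γ₃(E)`, and every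
set `{m, a, b}` containing a chosen pair gives a Jacobi relation that makes one of them redundant.
By the Kruskal–Katona theorem and `d ≤ k + 1`, there are at least `(d - 1).choose 2` such sets.
-/

section Greedy

open Submodule Module

variable {ι α K W : Type*} [Fintype ι] [LinearOrder α] [DivisionRing K] [AddCommGroup W]
  [Module K W]

open scoped Classical in
/-- The indices selected by the greedy algorithm that runs through a family of vectors in the order
of increasing weight and keeps those not spanned by the vectors of smaller weight. -/
noncomputable def greedyIndices (K : Type*) [DivisionRing K] [Module K W] (wt : ι → α)
    (v : ι → W) : Finset ι :=
  {i | v i ∉ span K (v '' {j | wt j < wt i})}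

theorem mem_greedyIndices {wt : ι → α} {v : ι → W} {i : ι} :
    i ∈ greedyIndices K wt v ↔ v i ∉ span K (v '' {j | wt j < wt i}) := by
  simp [greedyIndices]

theorem mem_of_notMem_greedyIndices {wt : ι → α} {v : ι → W} {i : ι}
    (hi : i ∉ greedyIndices K wt v) {S : Submodule K W} (hS : ∀ j, wt j < wt i → v j ∈ S) :
    v i ∈ S := by
  rw [mem_greedyIndices, not_not] at hi
  exact span_le.2 (Set.forall_mem_image.2 hS) hi

theorem span_image_greedyIndices [WellFoundedLT α] (wt : ι → α) (v : ι → W) :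
    span K (v '' greedyIndices K wt v) = span K (Set.range v) := by
  refine le_antisymm (span_mono (Set.image_subset_range _ _))
    (span_le.2 (Set.forall_mem_range.2 fun i => ?_))
  induction h : wt i using WellFoundedLT.induction generalizing i with
  | ind n ih =>
    subst h
    by_cases hi : i ∈ greedyIndices K wt v
    · exact subset_span ⟨i, hi, rfl⟩
    · exact mem_of_notMem_greedyIndices hi fun j hj => ih _ hj j rfl

theorem linearIndepOn_greedyIndices {wt : ι → α} (hwt : Function.Injective wt) (v : ι → W) :
    LinearIndepOn K v (greedyIndices K wt v : Set ι) := by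
  classical
  suffices h : ∀ s : Finset ι, s ⊆ greedyIndices K wt v → LinearIndepOn K v (s : Set ι) from
    h _ subset_rfl
  intro s
  induction s using Finset.induction_on_max_value wt with
  | empty => simp
  | insert a s ha hmax ih =>
    intro hs
    rw [Finset.insert_subset_iff] at hs
    rw [Finset.coe_insert]
    refine (ih hs.2).insert fun hspan => mem_greedyIndices.1 hs.1 (span_mono ?_ hspan)
    refine Set.image_mono fun j hj => (hmax j hj).lt_of_ne fun h => ha ?_
    exact hwt h ▸ hj

theorem card_greedyIndices [WellFoundedLT α] {wt : ι → α} (hwt : Function.Injective wt)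
    (v : ι → W) : (greedyIndices K wt v).card = finrank K (span K (Set.range v)) := by
  rw [← span_image_greedyIndices wt v, Set.image_eq_range,
    finrank_span_eq_card (linearIndepOn_greedyIndices hwt v)]
  simp

end Greedy

section AlternatingFamily

open Finset Submodule Module

/-- A family `c` indexed by pairs is alternating if `c a a = 0` and `c a b = -c b a`; the
commutators of a list of generators are the example of interest. -/
structure IsAlternatingFamily {ι W : Type*} [AddCommGroup W] (c : ι → ι → W) : Prop where
  self (a : ι) : c a a = 0
  swap (a b : ι) : c a b = -c b a

/-- The value `c a b` with `a < b` attached to an unordered pair `{a, b}` of indices, extended by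
zero to all finite sets. -/
noncomputable def pairVector {ι W : Type*} [LinearOrder ι] [AddCommGroup W] (c : ι → ι → W)
    (s : Finset ι) : W :=
  if h : #s = 2 then
    have hs : s.Nonempty := card_pos.1 (h ▸ two_pos)
    c (s.min' hs) (s.max' hs)
  else 0

theorem card_eq_two_of_pairVector_ne_zero {ι W : Type*} [LinearOrder ι] [AddCommGroup W]
    {c : ι → ι → W} {s : Finset ι} (h : pairVector c s ≠ 0) : #s = 2 := by
  by_contra hs
  exact h (dif_neg hs)

theorem pairVector_pair {ι W : Type*} [LinearOrder ι] [AddCommGroup W] (c : ι → ι → W) {a b : ι}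
    (hab : a ≠ b) : pairVector c {a, b} = c (min a b) (max a b) := by
  simp [pairVector, card_pair hab]

variable {ι K W : Type*} [LinearOrder ι] [AddCommGroup W] {c : ι → ι → W}

theorem IsAlternatingFamily.pairVector_pair_mem_iff [Ring K] [Module K W]
    (hc : IsAlternatingFamily c) {a b : ι} (hab : a ≠ b) {S : Submodule K W} :
    pairVector c {a, b} ∈ S ↔ c a b ∈ S := by
  rw [pairVector_pair c hab]
  rcases hab.lt_or_gt with h | h
  · rw [min_eq_left h.le, max_eq_right h.le]
  · rw [min_eq_right h.le, max_eq_left h.le, hc.swap, neg_mem_iff]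

theorem IsAlternatingFamily.span_range_pairVector [Ring K] [Module K W]
    (hc : IsAlternatingFamily c) :
    span K (Set.range (pairVector c)) = span K (Set.range (Function.uncurry c)) := by
  refine le_antisymm (span_le.2 ?_) (span_le.2 ?_)
  · rintro _ ⟨s, rfl⟩
    by_cases hs : #s = 2
    · obtain ⟨a, b, hab, rfl⟩ := card_eq_two.1 hs
      exact (hc.pairVector_pair_mem_iff hab).2 (subset_span ⟨(a, b), rfl⟩)
    · rw [pairVector, dif_neg hs]
      exact zero_mem _
  · rintro _ ⟨⟨a, b⟩, rfl⟩
    by_cases hab : a = b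
    · simp [hab, hc.self]
    · exact (hc.pairVector_pair_mem_iff hab).1 (subset_span ⟨{a, b}, rfl⟩)

theorem IsAlternatingFamily.apply_pairVector_pair_mem_of_jacobi [Ring K] [Module K W] {T : Type*}
    [AddCommGroup T] [Module K T] {t : ι → W →ₗ[K] T} (hc : IsAlternatingFamily c)
    (hjacobi : ∀ a b e, t a (c b e) + t b (c e a) + t e (c a b) = 0) {S : Submodule K T}
    {m a b : ι} (hma : m ≠ a) (hmb : m ≠ b) (hab : a ≠ b)
    (ha : t a (pairVector c {b, m}) ∈ S) (hb : t b (pairVector c {a, m}) ∈ S) :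
    t m (pairVector c {a, b}) ∈ S := by
  have mem_iff (u : ι) {v w : ι} (hvw : v ≠ w) :
      t u (pairVector c {v, w}) ∈ S ↔ t u (c v w) ∈ S :=
    hc.pairVector_pair_mem_iff (S := S.comap (t u)) hvw
  rw [mem_iff _ hmb.symm] at ha
  rw [mem_iff _ hma.symm] at hb
  have hrel : t m (c a b) = -(t a (c b m)) + t b (c a m) := by
    rw [hc.swap a m, map_neg, ← neg_add, eq_neg_iff_add_eq_zero, ← add_assoc, ← hjacobi m a b]
  rw [mem_iff _ hab, hrel]
  exact add_mem (neg_mem ha) hb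

end AlternatingFamily

section BasicPairs

open Finset Submodule Module

/-- The number whose binary digits are the elements of `s`; it orders finite sets
colexicographically and, unlike that order, can be added up over several sets. -/
def binaryWeight {d : ℕ} (s : Finset (Fin d)) : ℕ := ∑ i ∈ s, 2 ^ (i : ℕ)

theorem binaryWeight_injective (d : ℕ) :
    Function.Injective (binaryWeight : Finset (Fin d) → ℕ) := fun s t h =>
  map_injective _ (geomSum_injective le_rfl
    (a₁ := s.map Fin.valEmbedding) (a₂ := t.map Fin.valEmbedding) (by simpa [binaryWeight] using h))

theorem binaryWeight_insert {d : ℕ} {m : Fin d} {s : Finset (Fin d)} (hm : m ∉ s) :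
    binaryWeight (insert m s) = 2 ^ (m : ℕ) + binaryWeight s :=
  sum_insert hm

variable {d : ℕ} {K W : Type*} [DivisionRing K] [AddCommGroup W] [Module K W]
  {c : Fin d → Fin d → W}

/-- The pairs whose vectors form the greedy basis of the span of `c` in colexicographic order. -/
noncomputable def basicPairs (K : Type*) [DivisionRing K] [Module K W] (c : Fin d → Fin d → W) :
    Finset (Finset (Fin d)) :=
  greedyIndices K binaryWeight (pairVector c)

theorem sized_basicPairs (c : Fin d → Fin d → W) :
    (basicPairs K c : Set (Finset (Fin d))).Sized 2 := fun s hs =>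
  card_eq_two_of_pairVector_ne_zero (c := c) fun h => mem_greedyIndices.1 (mem_coe.1 hs) <| by
    rw [h]
    exact zero_mem _

namespace IsAlternatingFamily

theorem card_basicPairs (hc : IsAlternatingFamily c)
    (hspan : span K (Set.range (Function.uncurry c)) = ⊤) : #(basicPairs K c) = finrank K W := by
  rw [basicPairs, card_greedyIndices (binaryWeight_injective d), hc.span_range_pairVector, hspan,
    finrank_top]

theorem finrank_le_choose_two (hc : IsAlternatingFamily c)
    (hspan : span K (Set.range (Function.uncurry c)) = ⊤) : finrank K W ≤ d.choose 2 := by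
  rw [← hc.card_basicPairs hspan]
  simpa using (sized_basicPairs (K := K) c).card_le

end IsAlternatingFamily

end BasicPairs

section Jacobi

open Finset Submodule Module
open scoped FinsetFamily

variable {d : ℕ}

theorem choose_two_le_card_upShadow {A : Finset (Finset (Fin d))}
    (hA : (A : Set (Finset (Fin d))).Sized 2) (hcard : d ≤ #A + 1) :
    (d - 1).choose 2 ≤ #(∂⁺ A) := by
  obtain hd | hd := lt_or_ge d 3
  · simp [Nat.choose_eq_zero_of_lt (show d - 1 < 2 by lia)]
  have hsized : (Aᶜˢ : Set (Finset (Fin d))).Sized (d - 2) := by simpa using hA.compls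
  have hchoose : (d - 1).choose (d - 2) ≤ #Aᶜˢ := by
    rw [card_compls, Nat.choose_symm_of_eq_add (b := 1) (by lia), Nat.choose_one_right]
    lia
  have h := kruskal_katona_lovasz_form (i := 1) (by lia) (by lia) (by lia)
    (by simpa using hsized) hchoose
  rwa [Function.iterate_one, shadow_compls, card_compls,
    Nat.choose_symm_of_eq_add (b := 2) (by lia)] at h

variable {K W T : Type*} [DivisionRing K] [AddCommGroup W] [Module K W] [AddCommGroup T]
  [Module K T] {c : Fin d → Fin d → W} {t : Fin d → W →ₗ[K] T}

/- The three terms of a Jacobi relation have equal total weight, so each relation eliminates one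
term, named by `sel`, in favour of the two others. -/
theorem apply_pairVector_mem_of_jacobi (hc : IsAlternatingFamily c)
    (hjacobi : ∀ a b e, t a (c b e) + t b (c e a) + t e (c a b) = 0)
    (sel : Finset (Fin d) → Finset (Fin d)) {S : Submodule K T}
    (hS : ∀ m, ∀ s ∈ basicPairs K c, (m ∉ s → sel (insert m s) ≠ s) → t m (pairVector c s) ∈ S)
    (m : Fin d) (s : Finset (Fin d)) : t m (pairVector c s) ∈ S := by
  induction hn : 2 ^ (m : ℕ) + binaryWeight s using Nat.strong_induction_on generalizing m s with
  | h n ih =>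
    have of_not_selected (u : Fin d) (r : Finset (Fin d)) (hur : 2 ^ (u : ℕ) + binaryWeight r = n)
        (hsel : u ∉ r → sel (insert u r) ≠ r) : t u (pairVector c r) ∈ S := by
      by_cases hr : r ∈ basicPairs K c
      · exact hS u r hr hsel
      · exact mem_of_notMem_greedyIndices (S := S.comap (t u)) hr fun q hq =>
          ih _ (by lia) u q rfl
    by_cases hs : #s = 2
    swap
    · simp [pairVector, hs]
    by_cases hsel : m ∉ s → sel (insert m s) ≠ s
    · exact of_not_selected m s hn hsel
    push Not at hsel
    obtain ⟨hms, hsel⟩ := hsel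
    have of_insert_eq (u : Fin d) (r : Finset (Fin d)) (hur : u ∉ r)
        (heq : insert u r = insert m s) (hmr : m ∈ r) : t u (pairVector c r) ∈ S := by
      refine of_not_selected u r ?_ fun _ => ?_
      · rw [← binaryWeight_insert hur, heq, binaryWeight_insert hms, hn]
      · rw [heq, hsel]
        exact fun h => hms (h ▸ hmr)
    obtain ⟨a, b, hab, rfl⟩ := card_eq_two.1 hs
    rw [mem_insert, mem_singleton, not_or] at hms
    obtain ⟨hma, hmb⟩ := hms
    refine hc.apply_pairVector_pair_mem_of_jacobi hjacobi hma hmb hab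
      (of_insert_eq a {b, m} (by simp [hab, Ne.symm hma]) ?_ (by simp))
      (of_insert_eq b {a, m} (by simp [hab.symm, Ne.symm hmb]) ?_ (by simp))
    · rw [pair_comm, insert_comm]
    · rw [insert_comm, pair_comm, insert_comm]

theorem exists_selector_card_add_card_upShadow_le (A : Finset (Finset (Fin d))) :
    ∃ sel : Finset (Fin d) → Finset (Fin d),
      #{x ∈ univ ×ˢ A | x.1 ∉ x.2 → sel (insert x.1 x.2) ≠ x.2} + #(∂⁺ A) ≤ d * #A := by
  have hup : ∀ τ ∈ ∂⁺ A, ∃ s, s ∈ A ∧ ∃ m, m ∉ s ∧ insert m s = τ := fun τ hτ =>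
    mem_upShadow_iff.1 hτ
  choose! sel hsel using hup
  refine ⟨sel, ?_⟩
  have hcard := card_filter_add_card_filter_not (s := univ ×ˢ A)
    (fun x : Fin d × Finset (Fin d) => x.1 ∉ x.2 → sel (insert x.1 x.2) ≠ x.2)
  rw [card_product, card_univ, Fintype.card_fin] at hcard
  rw [← hcard]
  refine Nat.add_le_add_left (card_le_card_of_surjOn (fun x => insert x.1 x.2) ?_) _
  intro τ hτ
  obtain ⟨hA, m, hm, hmτ⟩ := hsel τ hτ
  exact ⟨(m, sel τ), by simp [hA, hm, hmτ], hmτ⟩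

theorem finrank_add_choose_two_le_of_jacobi (hc : IsAlternatingFamily c)
    (hspan : span K (Set.range (Function.uncurry c)) = ⊤)
    (hjacobi : ∀ a b e, t a (c b e) + t b (c e a) + t e (c a b) = 0)
    (hrange : ⨆ m, (t m).range = ⊤) (hd : d ≤ finrank K W + 1) :
    finrank K T + (d - 1).choose 2 ≤ d * finrank K W := by
  classical
  obtain ⟨sel, hsel⟩ := exists_selector_card_add_card_upShadow_le (basicPairs K c)
  set R : Finset (Fin d × Finset (Fin d)) :=
    {x ∈ univ ×ˢ basicPairs K c | x.1 ∉ x.2 → sel (insert x.1 x.2) ≠ x.2}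
  have hR : span K ((R.image fun x => t x.1 (pairVector c x.2) : Finset T) : Set T) = ⊤ := by
    have hmem := apply_pairVector_mem_of_jacobi hc hjacobi sel
      (S := span K ((R.image fun x => t x.1 (pairVector c x.2) : Finset T) : Set T))
      fun m s hs hms => subset_span
        (mem_coe.2 (mem_image.2 ⟨(m, s), by simpa [R, hs] using hms, rfl⟩))
    rw [eq_top_iff, ← hrange, iSup_le_iff]
    intro m
    rw [LinearMap.range_eq_map, ← hspan, ← hc.span_range_pairVector, map_span_le]
    exact Set.forall_mem_range.2 (hmem m)
  have hT : finrank K T ≤ #R := by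
    rw [← finrank_top, ← hR]
    exact (finrank_span_finset_le_card _).trans card_image_le
  have hup := choose_two_le_card_upShadow (sized_basicPairs c)
    (hd.trans_eq (by rw [hc.card_basicPairs hspan]))
  rw [hc.card_basicPairs hspan] at hsel
  lia

end Jacobi

section CommutatorPairing

open Subgroup
open scoped commutatorElement IsMulCommutative

variable {E ι : Type*} [Group E]

theorem isMulCommutative_of_le_center {C : Subgroup E} (hC : C ≤ center E) : IsMulCommutative C :=
  ⟨⟨fun a b => Subtype.ext (mem_center_iff.1 (hC b.2) a)⟩⟩

theorem commutatorElement_mul_left_of_mem_center {a b c : E} (h : ⁅b, c⁆ ∈ center E) :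
    ⁅a * b, c⁆ = ⁅a, c⁆ * ⁅b, c⁆ := by
  rw [commutatorElement_mul_left_eq_conj_mul, mem_center_iff.1 h a, mul_inv_cancel_right,
    mem_center_iff.1 h]

theorem commutatorElement_mul_right_of_mem_center {a b c : E} (h : ⁅a, c⁆ ∈ center E) :
    ⁅a, b * c⁆ = ⁅a, b⁆ * ⁅a, c⁆ := by
  rw [commutatorElement_mul_right_eq_mul_conj, mul_assoc ⁅a, b⁆ b, mem_center_iff.1 h b,
    ← mul_assoc, mul_inv_cancel_right]

/-- The commutator `⁅a, b⁆` as an element of the derived subgroup. -/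
def derivedBracket (a b : E) : commutator E :=
  ⟨⁅a, b⁆, commutator_mem_commutator (mem_top a) (mem_top b)⟩

/-- The bimultiplicative map `(y, w) ↦ ⁅y, w⁆` for a subgroup `H` of `E` whose commutators with `E`
are central. It is used with `H = ⊤` in class two and with `H = commutator E` in class three. -/
def commutatorPairing (H : Subgroup E) [IsMulCommutative ↥⁅(⊤ : Subgroup E), H⁆]
    (hH : ⁅(⊤ : Subgroup E), H⁆ ≤ center E) : E →* H →* ↥⁅(⊤ : Subgroup E), H⁆ :=
  have mem (y : E) (w : H) : ⁅y, (w : E)⁆ ∈ ⁅(⊤ : Subgroup E), H⁆ :=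
    commutator_mem_commutator (mem_top y) w.2
  MonoidHom.mk' (fun y => MonoidHom.mk' (fun w => ⟨⁅y, (w : E)⁆, mem y w⟩) fun _ w =>
      Subtype.ext (commutatorElement_mul_right_of_mem_center (hH (mem y w))))
    fun _ z => MonoidHom.ext fun w =>
      Subtype.ext (commutatorElement_mul_left_of_mem_center (hH (mem z w)))

variable {H : Subgroup E} [IsMulCommutative ↥⁅(⊤ : Subgroup E), H⁆]
  (hH : ⁅(⊤ : Subgroup E), H⁆ ≤ center E)

theorem commutator_sup_center_le_ker_commutatorPairing :
    commutator E ⊔ center E ≤ (commutatorPairing H hH).ker :=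
  sup_le (Abelianization.commutator_subset_ker _) fun _ hz => MonoidHom.ext fun w =>
    Subtype.ext (commutatorElement_eq_one_iff_mul_comm.2 (mem_center_iff.1 hz w).symm)

theorem commutatorPairing_apply_eq_one_of_mem_center (y : E) {w : H} (hw : (w : E) ∈ center E) :
    commutatorPairing H hH y w = 1 :=
  Subtype.ext (commutatorElement_eq_one_iff_mul_comm.2 (mem_center_iff.1 hw y))

theorem iSup_range_commutatorPairing {x : ι → E} (hx : closure (Set.range x) ⊔ center E = ⊤) :
    ⨆ i, (commutatorPairing H hH (x i)).range = ⊤ := by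
  set S := ⨆ i, (commutatorPairing H hH (x i)).range
  let quot : E →* H →* ↥⁅(⊤ : Subgroup E), H⁆ ⧸ S :=
    (MonoidHom.compHom (QuotientGroup.mk' S)).comp (commutatorPairing H hH)
  have hquot : closure (Set.range x) ⊔ center E ≤ quot.ker := by
    rw [sup_le_iff, closure_le]
    constructor
    · rintro _ ⟨i, rfl⟩
      exact MonoidHom.ext fun w =>
        (QuotientGroup.eq_one_iff _).2 (mem_iSup_of_mem i (MonoidHom.mem_range.2 ⟨w, rfl⟩))
    · refine (le_sup_right.trans (commutator_sup_center_le_ker_commutatorPairing hH)).trans ?_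
      intro y hy
      rw [MonoidHom.mem_ker] at hy ⊢
      simp [quot, hy]
  have hmem (y : E) (w : H) : commutatorPairing H hH y w ∈ S :=
    (QuotientGroup.eq_one_iff _).1
      (DFunLike.congr_fun (MonoidHom.mem_ker.1 (hquot (hx.ge (mem_top y)))) w)
  have hmap : ⁅(⊤ : Subgroup E), H⁆ ≤ S.map (Subgroup.subtype _) :=
    commutator_le.2 fun y _ w hw => ⟨_, hmem y ⟨w, hw⟩, rfl⟩
  refine eq_top_iff.2 fun u _ => ?_
  obtain ⟨v, hv, hvu⟩ := hmap u.2
  exact Subtype.ext hvu ▸ hv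

theorem eq_top_of_commutatorPairing_mem {p : ℕ}
    [Module (ZMod p) (Additive ↥⁅(⊤ : Subgroup E), H⁆)] {x : ι → E}
    (hx : closure (Set.range x) ⊔ center E = ⊤)
    {S : Submodule (ZMod p) (Additive ↥⁅(⊤ : Subgroup E), H⁆)}
    (hS : ∀ i w, .ofMul (commutatorPairing H hH (x i) w) ∈ S) : S = ⊤ := by
  have htop : ⊤ ≤ AddSubgroup.toSubgroup' S.toAddSubgroup := by
    rw [← iSup_range_commutatorPairing hH hx, iSup_le_iff]
    rintro i _ ⟨w, rfl⟩
    exact hS i w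
  exact eq_top_iff.2 fun u _ => htop (mem_top u.toMul)

include hH in
theorem pow_eq_one_of_pow_mem_commutator_sup_center {p : ℕ}
    (hpow : ∀ y : E, y ^ p ∈ commutator E ⊔ center E) (u : ↥⁅(⊤ : Subgroup E), H⁆) : u ^ p = 1 := by
  have hker : (powMonoidHom p : ↥⁅(⊤ : Subgroup E), H⁆ →* _).ker = ⊤ := by
    rw [eq_top_iff, ← iSup_range_commutatorPairing hH (x := id) (by simp), iSup_le_iff]
    rintro y _ ⟨w, rfl⟩
    rw [MonoidHom.mem_ker, powMonoidHom_apply, id, ← MonoidHom.pow_apply, ← map_pow,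
      commutator_sup_center_le_ker_commutatorPairing hH (hpow y), MonoidHom.one_apply]
  exact MonoidHom.mem_ker.1 (hker ▸ mem_top u)

end CommutatorPairing

section ClassTwo

open Subgroup Submodule Module
open scoped commutatorElement IsMulCommutative

theorem natCard_eq_pow_finrank_additive (p : ℕ) [Fact p.Prime] (A : Type*) [CommGroup A] [Finite A]
    [Module (ZMod p) (Additive A)] : Nat.card A = p ^ finrank (ZMod p) (Additive A) := by
  rw [← Nat.card_congr Additive.toMul, natCard_eq_pow_finrank (K := ZMod p) (V := Additive A),
    Nat.card_zmod]

variable {Q ι : Type*} [Group Q] [IsMulCommutative (commutator Q)]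

/-- The commutators of a family of elements, as vectors of the additively written derived
subgroup. -/
def commutatorFamily (x : ι → Q) (a b : ι) : Additive (commutator Q) :=
  .ofMul (derivedBracket (x a) (x b))

theorem isAlternatingFamily_commutatorFamily (x : ι → Q) :
    IsAlternatingFamily (commutatorFamily x) where
  self a := congrArg Additive.ofMul (Subtype.ext (commutatorElement_self (x a)))
  swap a b := congrArg Additive.ofMul (Subtype.ext (commutatorElement_inv (x b) (x a)).symm)

theorem span_range_commutatorFamily {p : ℕ} [Module (ZMod p) (Additive (commutator Q))]
    (hcl : commutator Q ≤ center Q) {x : ι → Q} (hx : closure (Set.range x) ⊔ center Q = ⊤) :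
    span (ZMod p) (Set.range (Function.uncurry (commutatorFamily x))) = ⊤ := by
  have : IsMulCommutative ↥⁅(⊤ : Subgroup Q), (⊤ : Subgroup Q)⁆ :=
    ‹IsMulCommutative (commutator Q)›
  let _ : Module (ZMod p) (Additive ↥⁅(⊤ : Subgroup Q), (⊤ : Subgroup Q)⁆) :=
    ‹Module (ZMod p) (Additive (commutator Q))›
  refine eq_top_of_commutatorPairing_mem (H := ⊤) hcl hx fun a w => ?_
  set S := span (ZMod p) (Set.range (Function.uncurry (commutatorFamily x)))
  let pairing : Q →* commutator Q :=
    (commutatorPairing ⊤ hcl (x a)).comp Subgroup.topEquiv.symm.toMonoidHom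
  have hcomap : closure (Set.range x) ⊔ center Q ≤
      (AddSubgroup.toSubgroup' S.toAddSubgroup).comap pairing := by
    rw [sup_le_iff, Subgroup.closure_le]
    constructor
    · rintro _ ⟨b, rfl⟩
      exact subset_span ⟨(a, b), rfl⟩
    · intro z hz
      have hpz : pairing z = 1 :=
        commutatorPairing_apply_eq_one_of_mem_center hcl (x a) (w := ⟨z, mem_top z⟩) hz
      rw [Subgroup.mem_comap, hpz]
      exact one_mem _
  exact hcomap (hx.ge (mem_top (w : Q)))

omit [IsMulCommutative (commutator Q)] in
theorem natCard_commutator_le_pow_choose_two {p d : ℕ} [Fact p.Prime] [Finite (commutator Q)]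
    (hcl : commutator Q ≤ center Q) (hpow : ∀ q : Q, q ^ p ∈ commutator Q ⊔ center Q)
    {x : Fin d → Q} (hx : closure (Set.range x) ⊔ center Q = ⊤) :
    Nat.card (commutator Q) ≤ p ^ d.choose 2 := by
  have := isMulCommutative_of_le_center hcl
  have : IsMulCommutative ↥⁅(⊤ : Subgroup Q), (⊤ : Subgroup Q)⁆ := this
  let _ : Module (ZMod p) (Additive (commutator Q)) :=
    AddCommGroup.zmodModule (G := Additive (commutator Q))
      (pow_eq_one_of_pow_mem_commutator_sup_center (H := ⊤) hcl hpow)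
  rw [natCard_eq_pow_finrank_additive p]
  exact Nat.pow_le_pow_right (Fact.out : p.Prime).pos
    ((isAlternatingFamily_commutatorFamily x).finrank_le_choose_two
      (span_range_commutatorFamily hcl hx))

end ClassTwo

section CentralExtension

open Subgroup
open scoped commutatorElement IsMulCommutative

variable {G E ι : Type*} [Group G] [Group E] {π : E →* G}

theorem natCard_map_mul_natCard_inf_ker (π : E →* G) (S : Subgroup E) :
    Nat.card (S.map π) * Nat.card (S ⊓ π.ker : Subgroup E) = Nat.card S := by
  rw [← relIndex_ker, ← inf_relIndex_left, mul_comm, ← relIndex_bot_left (S ⊓ π.ker),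
    relIndex_mul_relIndex _ _ _ bot_le inf_le_left, relIndex_bot_left]

theorem map_center_le_center (hπ : Function.Surjective π) : (center E).map π ≤ center G := by
  rintro _ ⟨z, hz, rfl⟩
  refine mem_center_iff.2 (hπ.forall.2 fun y => ?_)
  rw [← map_mul, mem_center_iff.1 hz y, map_mul]

theorem map_commutator_eq_commutator (hπ : Function.Surjective π) :
    (commutator E).map π = commutator G := by
  rw [commutator_def, map_commutator, map_top_of_surjective π hπ, commutator_def]

theorem pow_mem_commutator_sup_center_of_map (hπ : Function.Surjective π) (hker : π.ker ≤ center E)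
    {p : ℕ} (hpow : ∀ g : G, g ^ p ∈ commutator G) (y : E) :
    y ^ p ∈ commutator E ⊔ center E := by
  have hy : y ^ p ∈ ((commutator E).map π).comap π := by
    rw [mem_comap, map_pow, map_commutator_eq_commutator hπ]
    exact hpow (π y)
  rw [comap_map_eq] at hy
  exact sup_le_sup_left hker _ hy

theorem closure_range_sup_center_eq_top (hker : π.ker ≤ center E) {x : ι → E}
    (hx : closure (Set.range (π ∘ x)) = ⊤) : closure (Set.range x) ⊔ center E = ⊤ := by
  rw [Set.range_comp, ← MonoidHom.map_closure] at hx
  refine top_le_iff.1 (le_trans ?_ (sup_le_sup_left hker _))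
  rw [← comap_map_eq, hx, comap_top]

theorem top_commutator_commutator_le_ker (hcl : commutator G ≤ center G) :
    ⁅(⊤ : Subgroup E), commutator E⁆ ≤ π.ker := by
  refine commutator_le.2 fun y _ w hw => ?_
  have hw' : π w ∈ center G := hcl (commutator_mono le_top le_top
    (map_commutator (⊤ : Subgroup E) ⊤ π ▸ mem_map_of_mem π hw))
  rw [MonoidHom.mem_ker, map_commutatorElement, commutatorElement_eq_one_iff_mul_comm]
  exact mem_center_iff.1 hw' (π y)

/-- The homomorphism between derived subgroups induced by a homomorphism of groups. -/
def derivedMap (π : E →* G) : commutator E →* commutator G :=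
  (π.comp (commutator E).subtype).codRestrict (commutator G) fun w =>
    commutator_mono le_top le_top (map_commutator (⊤ : Subgroup E) ⊤ π ▸ mem_map_of_mem π w.2)

theorem derivedMap_derivedBracket (π : E →* G) (a b : E) :
    derivedMap π (derivedBracket a b) = derivedBracket (π a) (π b) :=
  Subtype.ext (map_commutatorElement π a b)

theorem derivedMap_surjective (hπ : Function.Surjective π) :
    Function.Surjective (derivedMap π) := by
  rintro ⟨g, hg⟩
  obtain ⟨w, hw, rfl⟩ := map_commutator_eq_commutator hπ ▸ hg
  exact ⟨⟨w, hw⟩, rfl⟩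

section Pairing

variable [IsMulCommutative ↥⁅(⊤ : Subgroup E), commutator E⁆]
  (hL : ⁅(⊤ : Subgroup E), commutator E⁆ ≤ center E)

/- The Hall–Witt identity loses its conjugations because the pairing is a homomorphism to an
abelian group in its first argument. -/
theorem commutatorPairing_jacobi (a b e : E) :
    commutatorPairing _ hL a (derivedBracket b e) * commutatorPairing _ hL b (derivedBracket e a) *
      commutatorPairing _ hL e (derivedBracket a b) = 1 := by
  have conj (u v : E) (w : commutator E) :
      commutatorPairing _ hL (u * v * u⁻¹) w = commutatorPairing _ hL v w := by
    rw [map_mul, map_mul, map_inv, mul_inv_cancel_comm]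
  have hallWitt : commutatorPairing _ hL (e * a * e⁻¹) (derivedBracket b e) *
      commutatorPairing _ hL (a * b * a⁻¹) (derivedBracket e a) *
      commutatorPairing _ hL (b * e * b⁻¹) (derivedBracket a b) = 1 := by
    rw [mul_comm (commutatorPairing _ hL _ _)]
    exact Subtype.ext (commutatorElement_conj_commutatorElement_mul a b e)
  rwa [conj, conj, conj] at hallWitt

theorem exists_commutatorPairing_descent (hπ : Function.Surjective π) (hker : π.ker ≤ center E) :
    ∃ τ : E → commutator G →* ↥⁅(⊤ : Subgroup E), commutator E⁆,
      ∀ y w, τ y (derivedMap π w) = commutatorPairing _ hL y w := by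
  refine ⟨fun y => (derivedMap π).liftOfSurjective (derivedMap_surjective hπ)
    ⟨commutatorPairing _ hL y, fun w hw => ?_⟩, fun y w => ?_⟩
  · exact commutatorPairing_apply_eq_one_of_mem_center hL y (hker (congrArg Subtype.val hw))
  · exact MonoidHom.liftOfRightInverse_comp_apply ..

end Pairing

theorem natCard_top_commutator_commutator_mul_le {p d k : ℕ} [Fact p.Prime]
    [Finite (commutator E)] (hπ : Function.Surjective π) (hker : π.ker ≤ center E)
    (hcl : commutator G ≤ center G) (hpow : ∀ g : G, g ^ p ∈ commutator G)
    (hk : Nat.card (commutator G) = p ^ k) {x : Fin d → E}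
    (hx : closure (Set.range (π ∘ x)) = ⊤) (hdk : d ≤ k + 1) :
    Nat.card ↥⁅(⊤ : Subgroup E), commutator E⁆ * p ^ (d - 1).choose 2 ≤ p ^ (d * k) := by
  have hL : ⁅(⊤ : Subgroup E), commutator E⁆ ≤ center E :=
    (top_commutator_commutator_le_ker hcl).trans hker
  have := isMulCommutative_of_le_center hL
  have := isMulCommutative_of_le_center hcl
  have : IsMulCommutative ↥⁅(⊤ : Subgroup G), (⊤ : Subgroup G)⁆ := this
  have : Finite (commutator G) := .of_surjective _ (derivedMap_surjective hπ)
  have : Finite ↥⁅(⊤ : Subgroup E), commutator E⁆ :=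
    .of_injective _ (inclusion_injective (commutator_le_right ⊤ (commutator E)))
  let _ : Module (ZMod p) (Additive (commutator G)) :=
    AddCommGroup.zmodModule (G := Additive (commutator G))
      (pow_eq_one_of_pow_mem_commutator_sup_center (H := ⊤) hcl fun g => mem_sup_left (hpow g))
  let _ : Module (ZMod p) (Additive ↥⁅(⊤ : Subgroup E), commutator E⁆) :=
    AddCommGroup.zmodModule (G := Additive ↥⁅(⊤ : Subgroup E), commutator E⁆)
      (pow_eq_one_of_pow_mem_commutator_sup_center hL
        (pow_mem_commutator_sup_center_of_map hπ hker hpow))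
  obtain ⟨τ, hτ⟩ := exists_commutatorPairing_descent hL hπ hker
  have hkW : Module.finrank (ZMod p) (Additive (commutator G)) = k :=
    Nat.pow_right_injective (Fact.out : p.Prime).two_le
      (by simp only [← natCard_eq_pow_finrank_additive p, hk])
  have hbound := finrank_add_choose_two_le_of_jacobi (K := ZMod p)
    (t := fun m => (τ (x m)).toAdditive.toZModLinearMap p)
    (isAlternatingFamily_commutatorFamily (π ∘ x))
    (span_range_commutatorFamily hcl (by rw [hx, top_sup_eq])) ?_ ?_ (by rwa [hkW])
  · rw [natCard_eq_pow_finrank_additive p, ← pow_add]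
    rw [hkW] at hbound
    exact Nat.pow_le_pow_right (Fact.out : p.Prime).pos hbound
  · intro a b e
    have jacobi := commutatorPairing_jacobi hL (x a) (x b) (x e)
    simp only [← hτ, derivedMap_derivedBracket] at jacobi
    exact congrArg Additive.ofMul jacobi
  · refine eq_top_of_commutatorPairing_mem hL (closure_range_sup_center_eq_top hker hx)
      fun m w => Submodule.mem_iSup_of_mem m ⟨.ofMul (derivedMap π w), ?_⟩
    exact congrArg Additive.ofMul (hτ (x m) w)

theorem commutator_quotient_le_center :
    commutator (E ⧸ ⁅(⊤ : Subgroup E), commutator E⁆) ≤ center _ := by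
  have hmk := QuotientGroup.mk'_surjective ⁅(⊤ : Subgroup E), commutator E⁆
  rw [← commutator_top_left_eq_bot_iff_le_center, ← map_commutator_eq_commutator hmk,
    ← map_top_of_surjective _ hmk, ← map_commutator, QuotientGroup.map_mk'_self]

theorem natCard_map_commutator_le {p d : ℕ} [Fact p.Prime] [Finite (commutator E)]
    (hπ : Function.Surjective π) (hcl : commutator G ≤ center G)
    (hpow : ∀ y : E, y ^ p ∈ commutator E ⊔ center E) {x : Fin d → E}
    (hx : closure (Set.range x) ⊔ center E = ⊤) :
    Nat.card ((commutator E).map π) ≤ p ^ d.choose 2 := by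
  have := isMulCommutative_of_le_center hcl
  have : Finite (commutator G) := .of_surjective _ (derivedMap_surjective hπ)
  rw [map_commutator_eq_commutator hπ]
  refine natCard_commutator_le_pow_choose_two (x := π ∘ x) hcl (hπ.forall.2 fun y => ?_) ?_
  · have hy := mem_map_of_mem π (hpow y)
    rw [Subgroup.map_sup, map_pow, map_commutator_eq_commutator hπ] at hy
    exact sup_le_sup_left (map_center_le_center hπ) _ hy
  · refine top_le_iff.1 (le_trans ?_ (sup_le_sup_left (map_center_le_center hπ) _))
    rw [Set.range_comp, ← MonoidHom.map_closure, ← Subgroup.map_sup, hx, map_top_of_surjective π hπ]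

theorem commutatorElement_factorsThrough (hker : π.ker ≤ center E) :
    (fun z : E × E => ⁅z.1, z.2⁆).FactorsThrough (Prod.map π π) := by
  have mul_left (z : E) (hz : z ∈ center E) (a b : E) : ⁅a * z, b⁆ = ⁅a, b⁆ := by
    have h : ⁅z, b⁆ = 1 := commutatorElement_eq_one_iff_mul_comm.2 (mem_center_iff.1 hz b).symm
    rw [commutatorElement_mul_left_of_mem_center (h ▸ one_mem _), h, mul_one]
  have congr_left (a a' b : E) (h : π a = π a') : ⁅a, b⁆ = ⁅a', b⁆ := by
    rw [← mul_left (a'⁻¹ * a) (hker (by simp [MonoidHom.mem_ker, h])) a' b, mul_inv_cancel_left]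
  rintro ⟨a, b⟩ ⟨a', b'⟩ h
  obtain ⟨ha, hb⟩ := Prod.ext_iff.1 h
  calc ⁅a, b⁆ = ⁅a', b⁆ := congr_left a a' b ha
    _ = ⁅b, a'⁆⁻¹ := (commutatorElement_inv b a').symm
    _ = ⁅b', a'⁆⁻¹ := by rw [congr_left b b' a' hb]
    _ = ⁅a', b'⁆ := commutatorElement_inv b' a'

theorem finite_commutator_of_ker_le_center [Finite G] (hker : π.ker ≤ center E) :
    Finite (commutator E) := by
  obtain ⟨e, he⟩ := (Function.factorsThrough_iff (fun z : E × E => ⁅z.1, z.2⁆)).1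
    (commutatorElement_factorsThrough hker)
  have : Finite (commutatorSet E) := by
    refine ((Set.finite_range e).subset ?_).to_subtype
    rintro _ ⟨a, b, rfl⟩
    exact ⟨(π a, π b), (congrFun he (a, b)).symm⟩
  infer_instance

theorem natCard_commutator_inf_ker_le {p d k : ℕ} [Fact p.Prime]
    [Finite (commutator E)] (hπ : Function.Surjective π) (hker : π.ker ≤ center E)
    (hcl : commutator G ≤ center G) (hpow : ∀ g : G, g ^ p ∈ commutator G)
    (hk : Nat.card (commutator G) = p ^ k) {x : Fin d → E}
    (hx : closure (Set.range (π ∘ x)) = ⊤) (hd : d ≠ 0) (hdk : d ≤ k + 1) :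
    Nat.card (commutator E ⊓ π.ker : Subgroup E) ≤ p ^ ((d - 1) * (k + 1)) := by
  set L := ⁅(⊤ : Subgroup E), commutator E⁆
  obtain ⟨n, rfl⟩ := Nat.exists_eq_succ_of_ne_zero hd
  have hL := natCard_top_commutator_commutator_mul_le hπ hker hcl hpow hk hx hdk
  have hQ := natCard_map_commutator_le (QuotientGroup.mk'_surjective L)
    commutator_quotient_le_center (pow_mem_commutator_sup_center_of_map hπ hker hpow)
    (closure_range_sup_center_eq_top hker hx)
  have hcount : p ^ k * Nat.card (commutator E ⊓ π.ker : Subgroup E) =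
      Nat.card ((commutator E).map (QuotientGroup.mk' L)) * Nat.card L := by
    rw [← hk, ← map_commutator_eq_commutator hπ, natCard_map_mul_natCard_inf_ker,
      ← natCard_map_mul_natCard_inf_ker (QuotientGroup.mk' L), QuotientGroup.ker_mk',
      inf_eq_right.2 (commutator_le_right ⊤ (commutator E))]
  have hp : 0 < p := (Fact.out : p.Prime).pos
  refine Nat.le_of_mul_le_mul_left (c := p ^ (k + n.choose 2)) ?_ (by positivity)
  calc p ^ (k + n.choose 2) * Nat.card (commutator E ⊓ π.ker : Subgroup E)
      = Nat.card ((commutator E).map (QuotientGroup.mk' L)) *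
          (Nat.card L * p ^ n.choose 2) := by
        rw [pow_add, mul_right_comm, hcount, mul_assoc]
    _ ≤ p ^ (n + 1).choose 2 * p ^ ((n + 1) * k) := Nat.mul_le_mul hQ hL
    _ = p ^ (k + n.choose 2) * p ^ (n * (k + 1)) := by
        rw [Nat.choose_succ_succ' n 1, Nat.choose_one_right]
        ring

end CentralExtension

section Divisible

theorem exists_monoidHom_comp_eq {E A B : Type*} [Group E] [CommGroup A] [CommGroup B]
    [DivisibleBy (Additive B) ℤ] (i : A →* E) (χ : A →* B) (h : (commutator E).comap i ≤ χ.ker) :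
    ∃ f : E →* B, f.comp i = χ := by
  let j : A →* Abelianization E := Abelianization.of.comp i
  have hj : j.ker ≤ χ.ker := by
    rwa [← MonoidHom.comap_ker, Abelianization.ker_of]
  obtain ⟨f, hf⟩ := (Module.Baer.of_divisible (Additive B)).extension_property_addMonoidHom
    (QuotientGroup.kerLift j).toAdditive (QuotientGroup.kerLift_injective j)
    (QuotientGroup.lift j.ker χ hj).toAdditive
  refine ⟨(MonoidHom.toAdditive.symm f).comp Abelianization.of, MonoidHom.ext fun a => ?_⟩
  exact congrArg Additive.toMul (DFunLike.congr_fun hf (.ofMul (a : A ⧸ j.ker)))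

noncomputable instance divisibleByIntUnits {K : Type*} [Field K] [IsAlgClosed K] :
    DivisibleBy (Additive Kˣ) ℤ :=
  have surj {n : ℕ} (hn : n ≠ 0) (u : Kˣ) : ∃ v : Kˣ, v ^ n = u := by
    obtain ⟨z, hz⟩ := IsAlgClosed.exists_pow_nat_eq (u : K) (Nat.pos_of_ne_zero hn)
    have hz0 : z ≠ 0 := fun h => u.ne_zero (by rw [← hz, h, zero_pow hn])
    exact ⟨.mk0 z hz0, Units.ext hz⟩
  have : DivisibleBy (Additive Kˣ) ℕ := divisibleByOfSMulRightSurj _ _ fun hn u =>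
    surj hn u.toMul
  AddGroup.divisibleByIntOfDivisibleByNat _

end Divisible

section Extension

/-- A two-cocycle of `G` with values in `A`, on which `G` acts trivially. No normalization is
imposed, so `u 1 1` may be nontrivial. -/
structure TwoCocycle (G A : Type*) [Group G] [CommGroup A] where
  toFun : G → G → A
  map_mul_mul (a b c : G) : toFun (a * b) c * toFun a b = toFun b c * toFun a (b * c)

namespace TwoCocycle

variable {G A : Type*} [Group G] [CommGroup A]

instance : CoeFun (TwoCocycle G A) fun _ => G → G → A := ⟨toFun⟩

theorem map_one_left (u : TwoCocycle G A) (g : G) : u 1 g = u 1 1 := by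
  simpa using (u.map_mul_mul 1 1 g).symm

theorem map_one_right (u : TwoCocycle G A) (g : G) : u g 1 = u 1 1 := by
  simpa using u.map_mul_mul g 1 1

/-- The central extension of `G` by `A` with cocycle `u`: the set `G × A` with the multiplication
twisted by `u`. -/
@[ext]
structure Extension (u : TwoCocycle G A) where
  fst : G
  snd : A

namespace Extension

variable {u : TwoCocycle G A}

instance : Mul u.Extension := ⟨fun x y => ⟨x.fst * y.fst, x.snd * y.snd * u x.fst y.fst⟩⟩

instance : One u.Extension := ⟨⟨1, (u 1 1)⁻¹⟩⟩

instance : Inv u.Extension :=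
  ⟨fun x => ⟨x.fst⁻¹, x.snd⁻¹ * (u 1 1)⁻¹ * (u x.fst⁻¹ x.fst)⁻¹⟩⟩

theorem mul_def (x y : u.Extension) :
    x * y = ⟨x.fst * y.fst, x.snd * y.snd * u x.fst y.fst⟩ := rfl

theorem one_def : (1 : u.Extension) = ⟨1, (u 1 1)⁻¹⟩ := rfl

theorem inv_def (x : u.Extension) :
    x⁻¹ = ⟨x.fst⁻¹, x.snd⁻¹ * (u 1 1)⁻¹ * (u x.fst⁻¹ x.fst)⁻¹⟩ := rfl

instance : Group u.Extension := Group.ofLeftAxioms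
  (fun x y z => Extension.ext (mul_assoc _ _ _) <| by
    calc x.snd * y.snd * u x.fst y.fst * z.snd * u (x.fst * y.fst) z.fst
        = x.snd * (y.snd * z.snd) * (u (x.fst * y.fst) z.fst * u x.fst y.fst) := by
          simp only [mul_assoc, mul_comm, mul_left_comm]
      _ = x.snd * (y.snd * z.snd * u y.fst z.fst) * u x.fst (y.fst * z.fst) := by
          rw [u.map_mul_mul]
          simp only [mul_assoc])
  (fun x => by simp [mul_def, one_def, map_one_left])
  (fun x => Extension.ext (inv_mul_cancel _) <| by
    simp only [mul_def, inv_def, one_def]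
    rw [mul_right_comm, inv_mul_cancel_right, mul_right_comm, inv_mul_cancel, one_mul])

/-- The projection of the extension onto `G`. -/
def proj (u : TwoCocycle G A) : u.Extension →* G := MonoidHom.mk' fst fun _ _ => rfl

theorem proj_surjective (u : TwoCocycle G A) : Function.Surjective (proj u) := fun g =>
  ⟨⟨g, 1⟩, rfl⟩

theorem ker_proj_le_center (u : TwoCocycle G A) : (proj u).ker ≤ Subgroup.center u.Extension := by
  intro x hx
  have hx1 : x.fst = 1 := hx
  refine Subgroup.mem_center_iff.2 fun y => ?_
  simp only [mul_def, hx1, map_one_left, map_one_right, one_mul, mul_one, mul_comm]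

/-- The inclusion of `A` in the extension. The factor `(u 1 1)⁻¹` is needed since `u` is not
normalized. -/
def incl (u : TwoCocycle G A) : A →* u.Extension :=
  MonoidHom.mk' (fun a => ⟨1, a * (u 1 1)⁻¹⟩) fun a b => by
    rw [mul_def, mul_one, mul_assoc (a * _), inv_mul_cancel_right, mul_right_comm]

theorem incl_injective (u : TwoCocycle G A) : Function.Injective (incl u) := fun _ _ h =>
  mul_right_cancel (congrArg snd h)

theorem range_incl (u : TwoCocycle G A) : (incl u).range = (proj u).ker := by
  ext x
  refine ⟨?_, fun hx => ⟨x.snd * u 1 1, Extension.ext hx.symm (mul_inv_cancel_right _ _)⟩⟩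
  rintro ⟨a, rfl⟩
  rfl

theorem mk_one_mul_mk_one (g h : G) :
    (⟨g, 1⟩ : u.Extension) * ⟨h, 1⟩ = ⟨g * h, 1⟩ * incl u (u g h) := by
  simp [mul_def, incl, map_one_right]

theorem map_mk_one_mul {B : Type*} [Group B] (f : u.Extension →* B) (g h : G) :
    f ⟨g, 1⟩ * f ⟨h, 1⟩ = f ⟨g * h, 1⟩ * f (incl u (u g h)) := by
  rw [← map_mul, mk_one_mul_mk_one, map_mul]

theorem natCard_comap_incl (u : TwoCocycle G A) (S : Subgroup u.Extension) :
    Nat.card (S.comap (incl u)) = Nat.card (S ⊓ (proj u).ker : Subgroup u.Extension) := by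
  rw [← Subgroup.card_map_of_injective (incl_injective u), Subgroup.map_comap_eq, range_incl,
    inf_comm]

end Extension

end TwoCocycle

end Extension

section Transgression

open groupCohomology TwoCocycle Extension

variable {G : Type} [Group G]

/-- The `ℂˣ`-valued two-cocycles of `G`, written multiplicatively. -/
abbrev UnitCocycles (G : Type) [Group G] : Type :=
  Multiplicative (cocycles₂ (Rep.trivial ℤ G (Additive ℂˣ)))

/-- The tautological cocycle of `G`, with values in the characters of the group of all `ℂˣ`-valued
cocycles: every `ℂˣ`-valued cocycle is obtained from it by evaluation. -/
noncomputable def universalCocycle (G : Type) [Group G] :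
    TwoCocycle G (UnitCocycles G →* ℂˣ) where
  toFun g h := MonoidHom.mk' (fun z => (z.toAdd (g, h) : Additive ℂˣ).toMul) fun _ _ => rfl
  map_mul_mul a b c := MonoidHom.ext fun z => congrArg Additive.toMul
    ((mem_cocycles₂_iff (A := Rep.trivial ℤ G (Additive ℂˣ)) z.toAdd.1).1 z.toAdd.2 a b c)

/-- The intersection of the derived subgroup of the extension with cocycle `universalCocycle G` and
the kernel of its projection, regarded as a subgroup of the coefficient group. -/
noncomputable abbrev universalDerivedKernel (G : Type) [Group G] :
    Subgroup (UnitCocycles G →* ℂˣ) :=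
  (commutator (universalCocycle G).Extension).comap (incl (universalCocycle G))

/-- The inverse transgression: a cocycle `z` goes to the character of the kernel of the universal
extension given by evaluation at `z`, restricted to the derived subgroup. -/
noncomputable def cocycleCharacter :
    UnitCocycles G →* universalDerivedKernel G →* ℂˣ :=
  (MonoidHom.compHom' (universalDerivedKernel G).subtype).comp MonoidHom.eval

theorem mem_coboundaries₂_of_cocycleCharacter_eq_one {z : UnitCocycles G}
    (hz : cocycleCharacter z = 1) :
    (z.toAdd : G × G → Additive ℂˣ) ∈ coboundaries₂ (Rep.trivial ℤ G (Additive ℂˣ)) := by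
  obtain ⟨f, hf⟩ := exists_monoidHom_comp_eq (incl (universalCocycle G)) (MonoidHom.eval z)
    fun a ha => MonoidHom.mem_ker.2 (DFunLike.congr_fun hz ⟨a, ha⟩)
  refine ⟨fun g => .ofMul (f ⟨g, 1⟩), funext fun (g, h) => ?_⟩
  have hgh : f ⟨h, 1⟩ / f ⟨g * h, 1⟩ * f ⟨g, 1⟩ = universalCocycle G g h z := by
    rw [div_mul_eq_mul_div, mul_comm, map_mk_one_mul, mul_div_cancel_left]
    exact DFunLike.congr_fun hf (universalCocycle G g h)
  exact congrArg Additive.ofMul hgh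

theorem natCard_schurMultiplier_le_natCard_monoidHom [Finite (universalDerivedKernel G)] :
    Nat.card (schurMultiplier G) ≤ Nat.card (universalDerivedKernel G →* ℂˣ) := by
  have hsurj : Function.Surjective (H2π (Rep.trivial ℤ G (Additive ℂˣ))) := fun y =>
    H2_induction_on y fun z => ⟨z, rfl⟩
  change Nat.card (H2 (Rep.trivial ℤ G (Additive ℂˣ))) ≤ _
  refine Nat.card_le_card_of_injective
    (fun y => cocycleCharacter (.ofAdd (Function.surjInv hsurj y))) fun y y' h => ?_
  rw [← Function.surjInv_eq hsurj y, ← Function.surjInv_eq hsurj y', H2π_eq_iff]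
  refine mem_coboundaries₂_of_cocycleCharacter_eq_one
    (z := .ofAdd (Function.surjInv hsurj y) / .ofAdd (Function.surjInv hsurj y')) ?_
  exact (map_div (cocycleCharacter (G := G)) _ _).trans (div_eq_one.2 h)

theorem natCard_schurMultiplier_le [Finite G] :
    Nat.card (schurMultiplier G) ≤ Nat.card (commutator (universalCocycle G).Extension ⊓
      (proj (universalCocycle G)).ker : Subgroup (universalCocycle G).Extension) := by
  have := finite_commutator_of_ker_le_center (ker_proj_le_center (universalCocycle G))
  have : Finite (universalDerivedKernel G) :=
    .of_injective ((incl (universalCocycle G)).subgroupComap (commutator _)) fun _ _ h =>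
      Subtype.ext (incl_injective _ (congrArg Subtype.val h))
  rw [← natCard_comap_incl,
    ← CommGroup.card_monoidHom_of_hasEnoughRootsOfUnity (universalDerivedKernel G) ℂ]
  exact natCard_schurMultiplier_le_natCard_monoidHom

end Transgression

theorem exists_closure_range_fin_rank_eq_top (G : Type*) [Group G] [Group.FG G] :
    ∃ x : Fin (Group.rank G) → G, Subgroup.closure (Set.range x) = ⊤ := by
  obtain ⟨S, hS, hclosure⟩ := Group.rank_spec G
  refine ⟨Subtype.val ∘ (S.equivFinOfCardEq hS).symm, ?_⟩
  rw [EquivLike.range_comp, Subtype.range_val, hclosure]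

theorem commutator_le_center_of_nilpotencyClass_le_two {G : Type*} [Group G] [Group.IsNilpotent G]
    (hc : Group.nilpotencyClass G ≤ 2) : commutator G ≤ Subgroup.center G :=
  Subgroup.commutator_top_right_eq_bot_iff_le_center.1
    (Subgroup.lowerCentralSeries_eq_bot_iff_nilpotencyClass_le.2 hc)

/-- Corollary 2, upper bound in the case `d ≤ k + 1`:
`|M(G)| ≤ p ^ ((d - 1) * (k + 1))`. -/
theorem schur_multiplier_upper_bound_class_two_d_le (p k d : ℕ) (hp : p.Prime)
    (G : Type) [Group G] [Finite G] [Group.IsNilpotent G]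
    (hpG : IsPGroup p G)
    (hc : Group.nilpotencyClass G = 2)
    (hGp : Subgroup.closure (Set.range fun x : G => x ^ p) ≤ commutator G)
    (hk : Nat.card (commutator G) = p ^ k)
    (hd : Group.rank G = d)
    (hdk : d ≤ k + 1) :
    (Nat.card (schurMultiplier G) : ℝ) ≤ (p : ℝ) ^ (((d : ℝ) - 1) * ((k : ℝ) + 1)) := by
  have : Fact p.Prime := ⟨hp⟩
  have : Finite (commutator (universalCocycle G).Extension) :=
    finite_commutator_of_ker_le_center (TwoCocycle.Extension.ker_proj_le_center _)
  have hd0 : d ≠ 0 := by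
    rintro rfl
    have : Subsingleton G := Group.rank_eq_zero_iff.1 hd
    simp [Group.nilpotencyClass_zero_iff_subsingleton.2 this] at hc
  obtain ⟨x, hx⟩ := hd ▸ exists_closure_range_fin_rank_eq_top G
  obtain ⟨y, rfl⟩ := (TwoCocycle.Extension.proj_surjective (universalCocycle G)).comp_left x
  have hbound := (natCard_schurMultiplier_le (G := G)).trans <|
    natCard_commutator_inf_ker_le (TwoCocycle.Extension.proj_surjective _)
      (TwoCocycle.Extension.ker_proj_le_center _)
      (commutator_le_center_of_nilpotencyClass_le_two hc.le)
      (fun g => hGp (Subgroup.subset_closure ⟨g, rfl⟩)) hk hx hd0 hdk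
  have hexp : ((d : ℝ) - 1) * ((k : ℝ) + 1) = ((d - 1) * (k + 1) : ℕ) := by
    push_cast [Nat.cast_sub (Nat.one_le_iff_ne_zero.2 hd0)]
    ring
  rw [hexp, Real.rpow_natCast]
  exact_mod_cast hbound
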